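/- Assume (H1)–(H3), fix λ, μ with 0 < λ < Re λ* < ν < μ < (1+α)λ (α = min{1, r₁-2, r₂-2}), and set h_j(v) = J[f_j(φ+v) - f_j(φ) - Df_j(φ)v]. Then for j = 1,2 there exists a constant C independent of v and T such that ‖h_j(v)‖_{L^{q_j',μ}_T L^{r_j'}} ≤ C( ‖v‖_{X_T}² + ‖v‖_{X_T}^{r_j-1} ). -/

import Mathlib

open MeasureTheory ENNReal

noncomputable section

/-- Euclidean space ℝ^N. -/
abbrev Rn (N : ℕ) := EuclideanSpace ℝ (Fin N)

variable {N : ℕ}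

section BasicDefs

variable {G : Type} [NormedAddCommGroup G] [NormedSpace ℝ G]

/-- Pointwise Laplacian, defined via the second iterated Fréchet derivative. -/
def lap (f : Rn N → G) (x : Rn N) : G :=
  ∑ i : Fin N,
    iteratedFDeriv ℝ 2 f x ![EuclideanSpace.single i 1, EuclideanSpace.single i 1]

/-- Sobolev H^k norm (sum of L² norms of iterated derivatives up to order k). -/
def sobNorm (k : ℕ) (f : Rn N → G) : ℝ≥0∞ :=
  ∑ i ∈ Finset.range (k + 1), eLpNorm (iteratedFDeriv ℝ i f) 2 volume

/-- (Strong) membership in the Sobolev space H^k. -/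
def MemSobolev (k : ℕ) (f : Rn N → G) : Prop :=
  ContDiff ℝ (k : ℕ∞) f ∧ ∀ i ≤ k, MemLp (iteratedFDeriv ℝ i f) 2 volume

/-- L^q norm in time on (0,T) of an ℝ≥0∞-valued function. -/
def timeLp (q : ℝ≥0∞) (T : ℝ) (Φ : ℝ → ℝ≥0∞) : ℝ≥0∞ :=
  if q = ∞ then essSup Φ (volume.restrict (Set.Ioo 0 T))
  else (∫⁻ t in Set.Ioo 0 T, Φ t ^ q.toReal) ^ (1 / q.toReal)

/-- ‖e^{-λ·}f‖_{L^q((0,T),L^r)}. -/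
def twNorm (q r : ℝ≥0∞) (lam T : ℝ) (f : ℝ → Rn N → G) : ℝ≥0∞ :=
  timeLp q T (fun t => ENNReal.ofReal (Real.exp (-(lam * t))) * eLpNorm (f t) r volume)

/-- The weighted norm ‖f‖_{L^{q,λ}_T L^r} = e^{λT}‖e^{-λ·}f‖_{L^q((0,T),L^r)}. -/
def wNorm (q r : ℝ≥0∞) (lam T : ℝ) (f : ℝ → Rn N → G) : ℝ≥0∞ :=
  ENNReal.ofReal (Real.exp (lam * T)) * twNorm q r lam T f

/-- The weighted norm ‖f‖_{L^{∞,λ}_T H²}. -/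
def wNormH2 (lam T : ℝ) (f : ℝ → Rn N → G) : ℝ≥0∞ :=
  ENNReal.ofReal (Real.exp (lam * T)) *
    essSup (fun t => ENNReal.ofReal (Real.exp (-(lam * t))) * sobNorm 2 (f t))
      (volume.restrict (Set.Ioo 0 T))

/-- Pointwise time derivative of a time-dependent function. -/
def tderiv (v : ℝ → Rn N → G) : ℝ → Rn N → G :=
  fun t x => deriv (fun s => v s x) t

/-- The norm ‖v‖_{X_T} = ‖v‖_{L^{∞,λ}_T H²} + ‖∂ₜv‖_{L^{q₁,λ}_T L^{r₁}} + ‖∂ₜv‖_{L^{q₂,λ}_T L^{r₂}}. -/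
def XNorm (q₁ r₁ q₂ r₂ : ℝ≥0∞) (lam T : ℝ) (v : ℝ → Rn N → G) : ℝ≥0∞ :=
  wNormH2 lam T v + wNorm q₁ r₁ lam T (tderiv v) + wNorm q₂ r₂ lam T (tderiv v)

end BasicDefs

/-- A pair (q,r) is admissible: 2/q = N(1/2-1/r), 2 ≤ r ≤ 2N/(N-2)
(2 ≤ r < ∞ if N = 2, 2 ≤ r ≤ ∞ if N = 1), (q,r) ≠ (2,∞). -/
def Admissible (N : ℕ) (q r : ℝ≥0∞) : Prop :=
  2 ≤ r ∧ 2 / q = (N : ℝ≥0∞) * (1 / 2 - 1 / r) ∧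
    (3 ≤ N → r ≤ 2 * (N : ℝ≥0∞) / ((N : ℝ≥0∞) - 2)) ∧
    (N = 2 → r ≠ ∞) ∧ ¬(q = 2 ∧ r = ∞)

/-- Subcriticality: 1 < p < 2* - 1 with 2* = 2N/(N-2) for N ≥ 3 and 2* = ∞ for N = 1,2. -/
def Subcrit (N : ℕ) (p : ℝ) : Prop :=
  1 < p ∧ (3 ≤ N → p < 2 * (N : ℝ) / ((N : ℝ) - 2) - 1)

/-- The nonlinearity f(z) = -g(|z|²)z, identifying ℝ² with ℂ. -/
def fpot (g : ℝ → ℝ) : ℂ → ℂ :=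
  fun z => -((g (Complex.normSq z) : ℝ) : ℂ) * z

/-- The Hölder-type bound on the derivative required in (H1). -/
def H1bound (p : ℝ) (f : ℂ → ℂ) : Prop :=
  ContDiff ℝ 1 f ∧ f 0 = 0 ∧ fderiv ℝ f 0 = 0 ∧
    ∃ C : ℝ,
      (p ≤ 2 → ∀ z₁ z₂ : ℂ,
        ‖fderiv ℝ f z₁ - fderiv ℝ f z₂‖ ≤ C * ‖z₁ - z₂‖ ^ (p - 1)) ∧
      (2 < p → ∀ z₁ z₂ : ℂ,
        ‖fderiv ℝ f z₁ - fderiv ℝ f z₂‖ ≤ C * (‖z₁‖ ^ (p - 2) + ‖z₂‖ ^ (p - 2)) * ‖z₁ - z₂‖)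

/-- Hypothesis (H1). -/
structure H1full (N : ℕ) (g : ℝ → ℝ) (f₁ f₂ : ℂ → ℂ) (p₁ p₂ : ℝ) : Prop where
  gcont : ContinuousOn g (Set.Ici 0)
  hsum : ∀ z, fpot g z = f₁ z + f₂ z
  sub1 : Subcrit N p₁
  sub2 : Subcrit N p₂
  bd1 : H1bound p₁ f₁
  bd2 : H1bound p₂ f₂

/-- Hypothesis (H2): ω > 0 and φ ∈ H¹ is a nontrivial solution of -Δφ + ωφ - g(|φ|²)φ = 0. -/
def H2hyp (ω : ℝ) (g : ℝ → ℝ) (φ : Rn N → ℂ) : Prop :=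
  0 < ω ∧ φ ≠ 0 ∧ MemSobolev 1 φ ∧
    ∀ x, -(lap φ x) + (ω : ℂ) * φ x - ((g (Complex.normSq (φ x)) : ℝ) : ℂ) * φ x = 0

/-- The linearized operator A = JH acting on ℝ²-valued functions, in the identification
ℝ² ≅ ℂ (so that J is multiplication by -i). -/
def Aop (g : ℝ → ℝ) (ω : ℝ) (φ : Rn N → ℂ) (u : Rn N → ℂ) : Rn N → ℂ :=
  fun x => -Complex.I * (-(lap u x) + (ω : ℂ) * u x + fderiv ℝ (fpot g) (φ x) (u x))

/-- Complexification of a real-linear map on ℝ² ≅ ℂ, acting on ℂ². -/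
def cext (T : ℂ →L[ℝ] ℂ) (w : ℂ × ℂ) : ℂ × ℂ :=
  (((T 1).re : ℂ) * w.1 + ((T Complex.I).re : ℂ) * w.2,
   ((T 1).im : ℂ) * w.1 + ((T Complex.I).im : ℂ) * w.2)

/-- The complexified linearized operator A = J(H₀ + Df(φ)) acting on ℂ²-valued functions. -/
def AopC (g : ℝ → ℝ) (ω : ℝ) (φ : Rn N → ℂ) (u : Rn N → ℂ × ℂ) : Rn N → ℂ × ℂ :=
  fun x =>
    (-(lap (fun y => (u y).2) x) + (ω : ℂ) * (u x).2 +
        (cext (fderiv ℝ (fpot g) (φ x)) (u x)).2,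
     -(-(lap (fun y => (u y).1) x) + (ω : ℂ) * (u x).1 +
        (cext (fderiv ℝ (fpot g) (φ x)) (u x)).1))

/-- z is an eigenvalue of the (complexified) linearized operator A. -/
def IsEigen (g : ℝ → ℝ) (ω : ℝ) (φ : Rn N → ℂ) (z : ℂ) : Prop :=
  ∃ χ : Rn N → ℂ × ℂ, χ ≠ 0 ∧ MemSobolev 2 χ ∧ ∀ x, AopC g ω φ χ x = z • χ x

/-- Hypothesis (H3): A has an eigenvalue with positive real part. -/
def H3hyp (g : ℝ → ℝ) (ω : ℝ) (φ : Rn N → ℂ) : Prop :=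
  ∃ z : ℂ, 0 < z.re ∧ IsEigen g ω φ z

/-- u is a (global H¹) solution of i∂ₜu + Δu + g(|u|²)u = 0. -/
def IsNLS (g : ℝ → ℝ) (u : ℝ → Rn N → ℂ) : Prop :=
  (∀ t, MemSobolev 1 (u t)) ∧
    ∀ t x, HasDerivAt (fun s => u s x)
      (Complex.I * (lap (u t) x + ((g (Complex.normSq (u t x)) : ℝ) : ℂ) * u t x)) t

/-- Orbital stability of the standing wave e^{iωt}φ. -/
def OrbStable (g : ℝ → ℝ) (ω : ℝ) (φ : Rn N → ℂ) : Prop :=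
  ∀ ε : ℝ, 0 < ε → ∃ δ : ℝ, 0 < δ ∧
    ∀ u : ℝ → Rn N → ℂ, IsNLS g u →
      sobNorm 1 (fun x => u 0 x - φ x) < ENNReal.ofReal δ →
      ∀ t : ℝ, 0 ≤ t → ∃ (θ : ℝ) (y : Rn N),
        sobNorm 1 (fun x => u t x - Complex.exp (θ * Complex.I) * φ (x + y)) <
          ENNReal.ofReal ε

/-- h(v) = J[f(φ+v) - f(φ) - Df(φ)v] in the identification ℝ² ≅ ℂ. -/
def hfun (f : ℂ → ℂ) (φ v : Rn N → ℂ) : Rn N → ℂ :=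
  fun x => -Complex.I * (f (φ x + v x) - f (φ x) - fderiv ℝ f (φ x) (v x))

/-- ∂ₜ h(v) = J[Df(φ+v) - Df(φ)]∂ₜv. -/
def hderiv (f : ℂ → ℂ) (φ : Rn N → ℂ) (v : ℝ → Rn N → ℂ) : ℝ → Rn N → ℂ :=
  fun t x => -Complex.I * ((fderiv ℝ f (φ x + v t x) - fderiv ℝ f (φ x)) (tderiv v t x))

/-- v is a (global H²) solution of ∂ₜv = Av + h(v). -/
def IsLinSol (g : ℝ → ℝ) (ω : ℝ) (φ : Rn N → ℂ) (v : ℝ → Rn N → ℂ) : Prop :=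
  (∀ t, MemSobolev 2 (v t)) ∧
    ∀ t x, HasDerivAt (fun s => v s x)
      (Aop g ω φ (v t) x + hfun (fpot g) φ (v t) x) t

/-- The operator A = JH₀ + V with a bounded 2×2 matrix potential V,
acting on ℂ²-valued functions. -/
def AVop (ω : ℝ) (V : Rn N → Matrix (Fin 2) (Fin 2) ℝ) (u : Rn N → ℂ × ℂ) :
    Rn N → ℂ × ℂ :=
  fun x =>
    ((-(lap (fun y => (u y).2) x) + (ω : ℂ) * (u x).2) +
        ((V x 0 0 : ℝ) : ℂ) * (u x).1 + ((V x 0 1 : ℝ) : ℂ) * (u x).2,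
     (-(-(lap (fun y => (u y).1) x) + (ω : ℂ) * (u x).1)) +
        ((V x 1 0 : ℝ) : ℂ) * (u x).1 + ((V x 1 1 : ℝ) : ℂ) * (u x).2)

/-- V is a bounded (L^∞) matrix potential. -/
def VBounded (V : Rn N → Matrix (Fin 2) (Fin 2) ℝ) : Prop :=
  (∀ i j, Measurable fun x => V x i j) ∧ ∃ M : ℝ, ∀ x i j, |V x i j| ≤ M

/-- S is the strongly continuous group on L² generated by the operator L. -/
structure IsEvolGroupC (L : (Rn N → ℂ × ℂ) → (Rn N → ℂ × ℂ))
    (S : ℝ → (Rn N → ℂ × ℂ) → (Rn N → ℂ × ℂ)) : Prop where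
  zero : ∀ u, S 0 u = u
  comp : ∀ s t u, S (s + t) u = S s (S t u)
  lin : ∀ (t : ℝ) (a : ℂ) (u v : Rn N → ℂ × ℂ),
    S t (fun x => a • u x + v x) = fun x => a • S t u x + S t v x
  cont : ∀ u, MemLp u 2 volume → ∀ t₀ : ℝ,
    Filter.Tendsto (fun t => eLpNorm (fun x => S t u x - S t₀ u x) 2 volume)
      (nhds t₀) (nhds 0)
  gen : ∀ u, MemSobolev 2 u → ∀ t : ℝ,
    MemSobolev 2 (S t u) ∧ ∀ x, HasDerivAt (fun s => S s u x) (L (S t u) x) t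

/-- Γ[f](t) = ∫₀ᵗ e^{(t-s)A} f(s) ds. -/
def Gamma (S : ℝ → (Rn N → ℂ × ℂ) → (Rn N → ℂ × ℂ)) (f : ℝ → Rn N → ℂ × ℂ)
    (t : ℝ) : Rn N → ℂ × ℂ :=
  fun x => ∫ s in (0:ℝ)..t, S (t - s) (f s) x

/-- α = min{1, r₁-2, r₂-2}. -/
def alphaConst (r₁ r₂ : ℝ) : ℝ := min 1 (min (r₁ - 2) (r₂ - 2))

/-- Real part of a ℂ²-valued function, as an element of the real space L²(ℝ^N,ℝ²) ≅ L²(ℝ^N,ℂ). -/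
def reChi (χ : Rn N → ℂ × ℂ) : Rn N → ℂ :=
  fun x => ((χ x).1.re : ℂ) + ((χ x).2.re : ℂ) * Complex.I

/-- The constant k = 1 if Im λ* = 0, k = exp(2π Re λ*/|Im λ*|) otherwise. -/
def kconst (lam : ℂ) : ℝ :=
  if lam.im = 0 then 1 else Real.exp (2 * Real.pi * lam.re / |lam.im|)

/-- The defining property of T_δ:
log(ε₀/(kδ)) ≤ Re λ* T_δ ≤ log(ε₀/δ) and Im λ* T_δ ∈ 2πℤ. -/
def TdeltaProp (lam : ℂ) (ε₀ δ T : ℝ) : Prop :=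
  Real.log (ε₀ / (kconst lam * δ)) ≤ lam.re * T ∧
    lam.re * T ≤ Real.log (ε₀ / δ) ∧ ∃ n : ℤ, lam.im * T = 2 * Real.pi * (n : ℝ)

/-- The real L² inner product on L²(ℝ^N,ℝ²) in the identification ℝ² ≅ ℂ. -/
def realL2inner (u v : Rn N → ℂ) : ℝ :=
  ∫ x, ((starRingEnd ℂ) (u x) * v x).re

/-- The L² inner product for ℂ²-valued functions. -/
def l2innerC2 (u v : Rn N → ℂ × ℂ) : ℂ :=
  ∫ x, ((starRingEnd ℂ) (u x).1 * (v x).1 + (starRingEnd ℂ) (u x).2 * (v x).2)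

section Resolvent

variable {G : Type} [NormedAddCommGroup G] [NormedSpace ℂ G]

/-- z belongs to the resolvent set of the operator L with domain `dom`:
there is a bounded everywhere-defined inverse of z - L mapping L² into the domain. -/
def InResSet (L : (Rn N → G) → (Rn N → G)) (dom : (Rn N → G) → Prop) (z : ℂ) : Prop :=
  ∃ R : (Rn N → G) → (Rn N → G),
    (∀ (a : ℂ) (u v : Rn N → G), R (fun x => a • u x + v x) = fun x => a • R u x + R v x) ∧
    (∀ u, MemLp u 2 volume → dom (R u)) ∧
    (∀ u, MemLp u 2 volume → ∀ x, z • R u x - L (R u) x = u x) ∧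
    (∀ u, dom u → ∀ x, R (fun y => z • u y - L u y) x = u x) ∧
    ∃ M : ℝ, ∀ u, eLpNorm (R u) 2 volume ≤ ENNReal.ofReal M * eLpNorm u 2 volume

/-- The spectrum of the operator L with domain `dom`. -/
def specSet (L : (Rn N → G) → (Rn N → G)) (dom : (Rn N → G) → Prop) : Set ℂ :=
  {z | ¬ InResSet L dom z}

end Resolvent

/-- z belongs to the essential spectrum of A (Weyl singular sequence characterization). -/
def InEssSpec (g : ℝ → ℝ) (ω : ℝ) (φ : Rn N → ℂ) (z : ℂ) : Prop :=
  ∃ u : ℕ → Rn N → ℂ × ℂ,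
    (∀ n, MemSobolev 2 (u n)) ∧ (∀ n, eLpNorm (u n) 2 volume = 1) ∧
    Filter.Tendsto
      (fun n => eLpNorm (fun x => AopC g ω φ (u n) x - z • u n x) 2 volume)
      Filter.atTop (nhds 0) ∧
    ∀ w : Rn N → ℂ × ℂ, MemLp w 2 volume →
      Filter.Tendsto (fun n => l2innerC2 (u n) w) Filter.atTop (nhds 0)

/-- The operator D = -Δ + ω acting on complex-valued functions. -/
def Dop (ω : ℝ) (u : Rn N → ℂ) : Rn N → ℂ :=
  fun x => -(lap u x) + (ω : ℂ) * u x

/-- The operator L(ξ) = [[ξ, -D],[D, ξ]]. -/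
def Lxi (ω : ℝ) (ξ : ℂ) (u : Rn N → ℂ × ℂ) : Rn N → ℂ × ℂ :=
  fun x => (ξ * (u x).1 - Dop ω (fun y => (u y).2) x,
            Dop ω (fun y => (u y).1) x + ξ * (u x).2)

/-- φ is a weak H¹ solution of -Δφ + ωφ - g(|φ|²)φ = 0. -/
def WeakH1Sol (ω : ℝ) (g : ℝ → ℝ) (φ : Rn N → ℂ) : Prop :=
  MemLp φ 2 volume ∧ Differentiable ℝ φ ∧ MemLp (fderiv ℝ φ) 2 volume ∧
    ∀ ψ : Rn N → ℂ, ContDiff ℝ (⊤ : ℕ∞) ψ → HasCompactSupport ψ →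
      ((∫ x, ∑ i : Fin N,
          fderiv ℝ φ x (EuclideanSpace.single i 1) *
            fderiv ℝ ψ x (EuclideanSpace.single i 1)) +
        (∫ x, (ω : ℂ) * φ x * ψ x) -
        ∫ x, ((g (Complex.normSq (φ x)) : ℝ) : ℂ) * φ x * ψ x) = 0

end

noncomputable section

/-- The power nonlinearity f(z) = -|z|^{p-1} z on ℝ² ≅ ℂ. -/
def fpow (p : ℝ) : ℂ → ℂ := fun z => -((‖z‖ ^ (p - 1) : ℝ) : ℂ) * z

end

noncomputable section

/-!
By the Hölder bound on `Df`, the Taylor remainder of `f` at `a` in the direction `b` is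
`O((|a| + |b|) ^ max (p - 2) 0 * |b| ^ min p 2)`. Hölder's inequality and the embedding `H¹ ⊂ Lʳ`,
`r = p + 1`, turn this into `‖h(v)‖_{r'} ≤ C (‖v‖² + ‖v‖ᵖ)` with `H¹` norms on the right. If `M`
denotes the weighted norm of `v`, then `‖v(t)‖_{H²} ≤ M e^{λ(t - T)}`, so for `t < T` this bound is
at most `C (M² + Mᵖ) e^{κ(t - T)}` with `κ = min 2 p * λ`. Since `μ < κ`, the weight `e^{μ(T - t)}`
leaves an exponential `e^{(κ - μ)(t - T)}` whose `L^q(0, T)` norm is bounded uniformly in `T`.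

The embedding follows from the Gagliardo–Nirenberg–Sobolev inequality for compactly supported
functions: a cutoff gives it from the ball of radius 2 to the ball of radius 1, and the local
inequality, raised to the power `r`, is integrated over all translates. This uses `2 ≤ r`, which
lets all but one factor of the local right-hand side be replaced by its global counterpart.
-/

open scoped NNReal

section Sobolev

theorem exists_eLpNorm_le_mul_eLpNorm_of_support_subset {α G : Type*} [MeasurableSpace α]
    [NormedAddCommGroup G] {μ : Measure α} {s : Set α} (hs : μ s ≠ ∞) {p q : ℝ≥0∞} (hpq : p ≤ q) :
    ∃ K : ℝ≥0, ∀ f : α → G, AEStronglyMeasurable f μ → f.support ⊆ s →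
      eLpNorm f p μ ≤ K * eLpNorm f q μ := by
  rcases eq_or_ne p 0 with rfl | hp
  · exact ⟨0, fun f _ _ => by simp⟩
  have hexp : 0 ≤ 1 / p.toReal - 1 / q.toReal := by
    rcases eq_or_ne q ∞ with rfl | hq
    · simp
    · have hp' : 0 < p.toReal := toReal_pos hp (ne_top_of_le_ne_top hq hpq)
      exact sub_nonneg.2 (one_div_le_one_div_of_le hp' (toReal_mono hq hpq))
  refine ⟨(μ s ^ (1 / p.toReal - 1 / q.toReal)).toNNReal, fun f hf hfs => ?_⟩
  rw [coe_toNNReal (rpow_ne_top_of_nonneg hexp hs), mul_comm,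
    ← eLpNorm_restrict_eq_of_support_subset hfs,
    ← eLpNorm_restrict_eq_of_support_subset (p := q) hfs, ← Measure.restrict_apply_univ s]
  exact eLpNorm_le_eLpNorm_mul_rpow_measure_univ hpq hf.restrict

/-- The range of exponents `r` for which the Sobolev embedding `H¹(ℝⁿ) ⊂ Lʳ(ℝⁿ)` holds, except that
for `n = 1` the exponent `r = ∞` is left out. The critical exponent is included. -/
def IsSobolevExponent (n : ℕ) (r : ℝ) : Prop :=
  2 ≤ r ∧ (3 ≤ n → r ≤ 2 * (n : ℝ) / ((n : ℝ) - 2))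

variable {E F : Type*} [NormedAddCommGroup E] [NormedSpace ℝ E] [FiniteDimensional ℝ E]
  [MeasurableSpace E] [BorelSpace E] [NormedAddCommGroup F] [NormedSpace ℝ F]

theorem exists_eLpNorm_fderiv_le_mul_eLpNorm_fderiv (μ : Measure E) [IsFiniteMeasureOnCompacts μ]
    {s : Set E} (hs : Bornology.IsBounded s) {p q : ℝ≥0∞} (hpq : p ≤ q) :
    ∃ K : ℝ≥0, ∀ w : E → F, ContDiff ℝ 1 w → w.support ⊆ s →
      eLpNorm (fderiv ℝ w) p μ ≤ K * eLpNorm (fderiv ℝ w) q μ := by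
  obtain ⟨K, hK⟩ := exists_eLpNorm_le_mul_eLpNorm_of_support_subset (G := E →L[ℝ] F)
    (hs.closure.measure_lt_top (μ := μ)).ne hpq
  exact ⟨K, fun w hw hws => hK _ (hw.continuous_fderiv one_ne_zero).aestronglyMeasurable
    ((support_fderiv_subset ℝ).trans (closure_mono hws))⟩

theorem exists_enorm_le_mul_eLpNorm_one_fderiv (μ : Measure E) [μ.IsAddHaarMeasure]
    (hE : Module.finrank ℝ E = 1) :
    ∃ K : ℝ≥0, ∀ w : E → F, ContDiff ℝ 1 w → HasCompactSupport w →
      ∀ x, ‖w x‖ₑ ≤ K * eLpNorm (fderiv ℝ w) 1 μ := by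
  let e : ℝ ≃L[ℝ] E := ContinuousLinearEquiv.ofFinrankEq (by rw [hE, Module.finrank_self])
  let c : ℝ≥0 := (Measure.map e volume).addHaarScalarFactor μ
  have hmap : Measure.map e volume = c • μ := Measure.isAddLeftInvariant_eq_smul _ _
  refine ⟨‖e 1‖₊ * c, fun w hw hwc x => ?_⟩
  have hderiv (t : ℝ) : ‖deriv (w ∘ e) t‖ₑ ≤ ‖e 1‖ₑ * ‖fderiv ℝ w (e t)‖ₑ := by
    have h : HasDerivAt (w ∘ e) (fderiv ℝ w (e t) (e 1)) t :=
      (hw.differentiable one_ne_zero _).hasFDerivAt.comp_hasDerivAt t e.hasDerivAt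
    rw [h.deriv, mul_comm]
    exact ContinuousLinearMap.le_opENorm _ _
  have hmeas : Measurable fun y => ‖fderiv ℝ w y‖ₑ :=
    (hw.continuous_fderiv one_ne_zero).enorm.measurable
  calc ‖w x‖ₑ = ‖(w ∘ e) (e.symm x)‖ₑ := by simp
    _ ≤ ∫⁻ t in Set.Iic (e.symm x), ‖deriv (w ∘ e) t‖ₑ :=
      (hwc.comp_homeomorph e.toHomeomorph).enorm_le_lintegral_Ici_deriv (hw.comp e.contDiff) _
    _ ≤ ∫⁻ t, ‖deriv (w ∘ e) t‖ₑ := setLIntegral_le_lintegral _ _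
    _ ≤ ∫⁻ t, ‖e 1‖ₑ * ‖fderiv ℝ w (e t)‖ₑ := lintegral_mono hderiv
    _ = ‖e 1‖ₑ * ∫⁻ y, ‖fderiv ℝ w y‖ₑ ∂Measure.map e volume := by
      rw [lintegral_map hmeas e.continuous.measurable,
        lintegral_const_mul' _ _ enorm_ne_top]
    _ = (‖e 1‖₊ * c : ℝ≥0) * eLpNorm (fderiv ℝ w) 1 μ := by
      rw [hmap, lintegral_smul_measure, eLpNorm_one_eq_lintegral_enorm, coe_mul, mul_assoc]
      rfl

theorem exists_eLpNorm_le_mul_eLpNorm_fderiv_of_finrank_eq_one (μ : Measure E) [μ.IsAddHaarMeasure]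
    (hE : Module.finrank ℝ E = 1) {s : Set E} (hs : Bornology.IsBounded s)
    {q : ℝ≥0∞} (hq : 1 ≤ q) (r : ℝ≥0∞) :
    ∃ K : ℝ≥0, ∀ w : E → F, ContDiff ℝ 1 w → w.support ⊆ s →
      eLpNorm w r μ ≤ K * eLpNorm (fderiv ℝ w) q μ := by
  obtain ⟨K₁, hK₁⟩ := exists_eLpNorm_le_mul_eLpNorm_of_support_subset (G := F)
    (hs.measure_lt_top (μ := μ)).ne (le_top : r ≤ ∞)
  obtain ⟨K₂, hK₂⟩ := exists_enorm_le_mul_eLpNorm_one_fderiv (F := F) μ hE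
  obtain ⟨K₃, hK₃⟩ := exists_eLpNorm_fderiv_le_mul_eLpNorm_fderiv (F := F) μ hs hq
  refine ⟨K₁ * (K₂ * K₃), fun w hw hws => ?_⟩
  have hwc : HasCompactSupport w := .of_support_subset_isCompact hs.isCompact_closure
    (hws.trans subset_closure)
  calc eLpNorm w r μ ≤ K₁ * eLpNorm w ∞ μ := hK₁ w hw.continuous.aestronglyMeasurable hws
    _ ≤ K₁ * (K₂ * eLpNorm (fderiv ℝ w) 1 μ) := by
      gcongr
      rw [eLpNorm_exponent_top]
      exact essSup_le_of_ae_le _ (.of_forall (hK₂ w hw hwc))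
    _ ≤ K₁ * (K₂ * (K₃ * eLpNorm (fderiv ℝ w) q μ)) := by gcongr; exact hK₃ w hw hws
    _ = (K₁ * (K₂ * K₃) : ℝ≥0) * eLpNorm (fderiv ℝ w) q μ := by push_cast; ring

variable [FiniteDimensional ℝ F]

theorem exists_eLpNorm_le_mul_eLpNorm_fderiv_of_inv_sub_inv_finrank_le (μ : Measure E)
    [μ.IsAddHaarMeasure] {s : Set E} (hs : Bornology.IsBounded s) {p r : ℝ≥0} {q : ℝ≥0∞}
    (hp : 1 ≤ p) (hpq : p ≤ q)
    (hpE : p < Module.finrank ℝ E) (hpr : (p : ℝ)⁻¹ - (Module.finrank ℝ E : ℝ)⁻¹ ≤ (r : ℝ)⁻¹) :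
    ∃ K : ℝ≥0, ∀ w : E → F, ContDiff ℝ 1 w → w.support ⊆ s →
      eLpNorm w r μ ≤ K * eLpNorm (fderiv ℝ w) q μ := by
  obtain ⟨K, hK⟩ := exists_eLpNorm_fderiv_le_mul_eLpNorm_fderiv (F := F) μ hs hpq
  refine ⟨eLpNormLESNormFDerivOfLeConst F μ s p r * K, fun w hw hws => ?_⟩
  grw [eLpNorm_le_eLpNorm_fderiv_of_le μ hw hws hp hpE (mod_cast hpr) hs, hK w hw hws, coe_mul,
    mul_assoc]

theorem exists_eLpNorm_le_mul_eLpNorm_fderiv_of_isSobolevExponent (μ : Measure E)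
    [μ.IsAddHaarMeasure] {s : Set E} (hs : Bornology.IsBounded s) (hE : 1 ≤ Module.finrank ℝ E)
    {r : ℝ≥0} (hr : IsSobolevExponent (Module.finrank ℝ E) r) :
    ∃ K : ℝ≥0, ∀ w : E → F, ContDiff ℝ 1 w → w.support ⊆ s →
      eLpNorm w r μ ≤ K * eLpNorm (fderiv ℝ w) 2 μ := by
  obtain ⟨hr2, hrE⟩ := hr
  obtain hE | hE | hE : Module.finrank ℝ E = 1 ∨ Module.finrank ℝ E = 2 ∨ 3 ≤ Module.finrank ℝ E :=
    by omega
  · exact exists_eLpNorm_le_mul_eLpNorm_fderiv_of_finrank_eq_one μ hE hs one_le_two r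
  · -- `p = 2r / (r + 2)` solves `1 / p - 1 / 2 = 1 / r`
    have hp2 : 2 * r / (r + 2) < 2 := by
      rw [← NNReal.coe_lt_coe]
      push_cast
      rw [div_lt_iff₀ (by positivity)]
      linarith
    refine exists_eLpNorm_le_mul_eLpNorm_fderiv_of_inv_sub_inv_finrank_le
      (p := 2 * r / (r + 2)) μ hs ?_ (mod_cast hp2.le) (by rwa [hE]) (le_of_eq ?_)
    · rw [← NNReal.coe_le_coe]
      push_cast
      rw [le_div_iff₀ (by positivity)]
      linarith
    · rw [hE]
      push_cast
      field_simp
      ring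
  · refine exists_eLpNorm_le_mul_eLpNorm_fderiv_of_inv_sub_inv_finrank_le (p := 2) μ hs
      one_le_two le_rfl (mod_cast hE) ?_
    have hE' : (3 : ℝ) ≤ Module.finrank ℝ E := mod_cast hE
    have := (le_div_iff₀ (by linarith)).1 (hrE hE)
    rw [NNReal.coe_ofNat, inv_sub_inv (by norm_num) (by positivity), ← one_div,
      div_le_div_iff₀ (by positivity) (by linarith)]
    linarith

theorem exists_cutoff_norm_fderiv_smul_le (E F : Type*) [NormedAddCommGroup E] [NormedSpace ℝ E]
    [FiniteDimensional ℝ E] [NormedAddCommGroup F] [NormedSpace ℝ F] :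
    ∃ (χ : E → ℝ) (M : ℝ≥0), ContDiff ℝ 1 χ ∧ χ.support ⊆ Metric.closedBall 0 2 ∧
      (∀ x ∈ Metric.closedBall 0 1, χ x = 1) ∧
      ∀ u : E → F, Differentiable ℝ u → ∀ x,
        ‖fderiv ℝ (χ • u) x‖ ≤ M * (‖u x‖ + ‖fderiv ℝ u x‖) := by
  let χ : ContDiffBump (0 : E) := ⟨1, 2, one_pos, one_lt_two⟩
  have hχ : ContDiff ℝ 1 χ := χ.contDiff
  obtain ⟨M, hM⟩ := (χ.hasCompactSupport.fderiv ℝ).exists_bound_of_continuous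
    (hχ.continuous_fderiv one_ne_zero)
  refine ⟨χ, M.toNNReal + 1, hχ, χ.support_eq.trans_subset Metric.ball_subset_closedBall,
    fun x hx => χ.one_of_mem_closedBall hx, fun u hu x => ?_⟩
  have hχ1 : ‖χ x‖ ≤ (M.toNNReal + 1 : ℝ≥0) := by
    rw [Real.norm_of_nonneg χ.nonneg]
    exact χ.le_one.trans (le_add_of_nonneg_left M.toNNReal.2)
  have hχM : ‖fderiv ℝ χ x‖ ≤ (M.toNNReal + 1 : ℝ≥0) :=
    (hM x).trans ((Real.le_coe_toNNReal M).trans (le_add_of_nonneg_right zero_le_one))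
  calc ‖fderiv ℝ ((χ : E → ℝ) • u) x‖
      = ‖χ x • fderiv ℝ u x + (fderiv ℝ χ x).smulRight (u x)‖ := by
        rw [fderiv_smul (hχ.differentiable one_ne_zero x) (hu x)]
    _ ≤ ‖χ x‖ * ‖fderiv ℝ u x‖ + ‖fderiv ℝ χ x‖ * ‖u x‖ := by
        grw [norm_add_le, norm_smul, ContinuousLinearMap.norm_smulRight_apply]
    _ ≤ (M.toNNReal + 1 : ℝ≥0) * (‖u x‖ + ‖fderiv ℝ u x‖) := by
        grw [hχ1, hχM, add_comm, mul_add]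

theorem exists_eLpNorm_restrict_closedBall_le (μ : Measure E) [μ.IsAddHaarMeasure]
    (hE : 1 ≤ Module.finrank ℝ E) {r : ℝ≥0} (hr : IsSobolevExponent (Module.finrank ℝ E) r) :
    ∃ K : ℝ≥0, ∀ u : E → F, ContDiff ℝ 1 u →
      eLpNorm u r (μ.restrict (Metric.closedBall 0 1)) ≤
        K * eLpNorm (fun x => ‖u x‖ + ‖fderiv ℝ u x‖) 2 (μ.restrict (Metric.closedBall 0 2)) := by
  obtain ⟨K, hK⟩ := exists_eLpNorm_le_mul_eLpNorm_fderiv_of_isSobolevExponent (F := F) μ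
    (Metric.isBounded_closedBall (x := (0 : E)) (r := 2)) hE hr
  obtain ⟨χ, M, hχ, hχs, hχ1, hχM⟩ := exists_cutoff_norm_fderiv_smul_le E F
  refine ⟨K * M, fun u hu => ?_⟩
  let g : E → ℝ := fun x => ‖u x‖ + ‖fderiv ℝ u x‖
  have hws : (χ • u).support ⊆ Metric.closedBall 0 2 :=
    (Function.support_smul_subset_left χ u).trans hχs
  have hdws : (fderiv ℝ (χ • u)).support ⊆ Metric.closedBall 0 2 :=
    (support_fderiv_subset ℝ).trans (closure_minimal hws Metric.isClosed_closedBall)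
  have hbound (x : E) :
      ‖fderiv ℝ (χ • u) x‖ ≤ M * ‖(Metric.closedBall (0 : E) 2).indicator g x‖ := by
    by_cases hx : x ∈ Metric.closedBall 0 2
    · rw [Set.indicator_of_mem hx, Real.norm_of_nonneg (by positivity)]
      exact hχM u (hu.differentiable one_ne_zero) x
    · rw [Function.notMem_support.1 fun h => hx (hdws h), norm_zero]
      positivity
  calc eLpNorm u r (μ.restrict (Metric.closedBall 0 1))
      = eLpNorm (χ • u) r (μ.restrict (Metric.closedBall 0 1)) := by
        refine eLpNorm_congr_ae ?_
        filter_upwards [ae_restrict_mem Metric.isClosed_closedBall.measurableSet] with x hx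
        simp [hχ1 x hx]
    _ ≤ eLpNorm (χ • u) r μ := eLpNorm_restrict_le _ _ _ _
    _ ≤ K * eLpNorm (fderiv ℝ (χ • u)) 2 μ := hK _ (hχ.smul hu) hws
    _ ≤ K * (M * eLpNorm ((Metric.closedBall (0 : E) 2).indicator g) 2 μ) := by
        gcongr
        simpa using eLpNorm_le_mul_eLpNorm_of_ae_le_mul (.of_forall hbound) 2
    _ = (K * M : ℝ≥0) * eLpNorm g 2 (μ.restrict (Metric.closedBall 0 2)) := by
        rw [eLpNorm_indicator_eq_eLpNorm_restrict Metric.isClosed_closedBall.measurableSet,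
          coe_mul, mul_assoc]

section Averaging

variable {G : Type*} [AddCommGroup G] [MeasurableSpace G] [MeasurableAdd₂ G] {μ : Measure G}
  [SFinite μ] [μ.IsAddLeftInvariant]

theorem lintegral_setLIntegral_add_eq {f : G → ℝ≥0∞} (hf : Measurable f) (s : Set G) :
    ∫⁻ y, ∫⁻ x in s, f (x + y) ∂μ ∂μ = μ s * ∫⁻ x, f x ∂μ := by
  have hmeas : Measurable (Function.uncurry fun y x => f (x + y)) :=
    hf.comp (measurable_snd.add measurable_fst)
  rw [lintegral_lintegral_swap hmeas.aemeasurable]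
  simp only [lintegral_add_left_eq_self, lintegral_const, Measure.restrict_apply_univ]
  exact mul_comm _ _

theorem measure_mul_lintegral_le_of_forall_translate_le {f g : G → ℝ≥0∞} (hf : Measurable f)
    (hg : Measurable g) {s t : Set G} {L : ℝ≥0∞} {a : ℝ} (ha : 1 ≤ a)
    (h : ∀ y, ∫⁻ x in s, f (x + y) ∂μ ≤ L * (∫⁻ x in t, g (x + y) ∂μ) ^ a) :
    μ s * ∫⁻ x, f x ∂μ ≤ L * μ t * (∫⁻ x, g x ∂μ) ^ a := by
  have rpow_eq (b : ℝ≥0∞) : b ^ a = b ^ (a - 1) * b := by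
    conv_rhs => rw [← rpow_one b, ← rpow_mul, one_mul]
    rw [← rpow_add_of_nonneg _ _ (sub_nonneg.2 ha) zero_le_one, sub_add_cancel]
  have hle (y : G) : ∫⁻ x in t, g (x + y) ∂μ ≤ ∫⁻ x, g x ∂μ := by
    refine (setLIntegral_le_lintegral _ _).trans_eq ?_
    simp only [add_comm _ y, lintegral_add_left_eq_self]
  have hmeas : Measurable fun y => ∫⁻ x in t, g (x + y) ∂μ := by
    have : Measurable (Function.uncurry fun y x => g (x + y)) :=
      hg.comp (measurable_snd.add measurable_fst)
    exact this.lintegral_prod_right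
  calc μ s * ∫⁻ x, f x ∂μ = ∫⁻ y, ∫⁻ x in s, f (x + y) ∂μ ∂μ :=
        (lintegral_setLIntegral_add_eq hf s).symm
    _ ≤ ∫⁻ y, L * (∫⁻ x, g x ∂μ) ^ (a - 1) * ∫⁻ x in t, g (x + y) ∂μ ∂μ := by
        refine lintegral_mono fun y => (h y).trans ?_
        rw [rpow_eq, ← mul_assoc]
        exact mul_le_mul' (mul_le_mul' le_rfl (rpow_le_rpow (hle y) (sub_nonneg.2 ha))) le_rfl
    _ = L * μ t * (∫⁻ x, g x ∂μ) ^ a := by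
        rw [lintegral_const_mul _ hmeas, lintegral_setLIntegral_add_eq hg, rpow_eq]
        ring

theorem measure_rpow_mul_eLpNorm_le_of_forall_translate_le {V W : Type*} [NormedAddCommGroup V]
    [MeasurableSpace V] [OpensMeasurableSpace V] [NormedAddCommGroup W] [MeasurableSpace W]
    [OpensMeasurableSpace W] {f : G → V} {g : G → W}
    (hf : Measurable f) (hg : Measurable g) {s t : Set G} {K : ℝ≥0∞} {p q : ℝ≥0} (hp : 0 < p)
    (hpq : p ≤ q)
    (h : ∀ y, eLpNorm (fun x => f (x + y)) q (μ.restrict s) ≤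
      K * eLpNorm (fun x => g (x + y)) p (μ.restrict t)) :
    μ s ^ (1 / (q : ℝ)) * eLpNorm f q μ ≤ K * μ t ^ (1 / (q : ℝ)) * eLpNorm g p μ := by
  have hp' : (0 : ℝ) < p := hp
  have hq : 0 < q := hp.trans_le hpq
  have hq' : (0 : ℝ) < q := hq
  have hint (y : G) : ∫⁻ x in s, ‖f (x + y)‖ₑ ^ (q : ℝ) ∂μ ≤
      K ^ (q : ℝ) * (∫⁻ x in t, ‖g (x + y)‖ₑ ^ (p : ℝ) ∂μ) ^ (q / p : ℝ) := by
    have := rpow_le_rpow (h y) hq'.le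
    rwa [mul_rpow_of_nonneg _ _ hq'.le, eLpNorm_nnreal_eq_lintegral hq.ne',
      eLpNorm_nnreal_eq_lintegral hp.ne', ← rpow_mul, ← rpow_mul, one_div_mul_cancel hq'.ne',
      rpow_one, one_div_mul_eq_div] at this
  have := rpow_le_rpow (measure_mul_lintegral_le_of_forall_translate_le (hf.enorm.pow_const _)
    (hg.enorm.pow_const _) ((one_le_div hp').2 (mod_cast hpq)) hint) (one_div_pos.2 hq').le
  rw [mul_rpow_of_nonneg _ _ (by positivity), mul_rpow_of_nonneg _ _ (by positivity),
    mul_rpow_of_nonneg _ _ (by positivity), ← rpow_mul, ← rpow_mul, mul_one_div_cancel hq'.ne',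
    rpow_one, div_mul_div_comm, mul_one, mul_comm (p : ℝ), ← div_div, div_self hq'.ne'] at this
  rwa [eLpNorm_nnreal_eq_lintegral hq.ne', eLpNorm_nnreal_eq_lintegral hp.ne']

end Averaging

theorem exists_eLpNorm_le_mul_eLpNorm_add_eLpNorm_fderiv (μ : Measure E) [μ.IsAddHaarMeasure]
    (hE : 1 ≤ Module.finrank ℝ E) {r : ℝ≥0} (hr : IsSobolevExponent (Module.finrank ℝ E) r) :
    ∃ K : ℝ≥0, ∀ u : E → F, ContDiff ℝ 1 u →
      eLpNorm u r μ ≤ K * (eLpNorm u 2 μ + eLpNorm (fderiv ℝ u) 2 μ) := by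
  obtain ⟨K, hK⟩ := exists_eLpNorm_restrict_closedBall_le (F := F) μ hE hr
  have hr0 : 0 ≤ 1 / (r : ℝ) := by positivity
  set a := μ (Metric.closedBall (0 : E) 1) ^ (1 / (r : ℝ))
  set b := μ (Metric.closedBall (0 : E) 2) ^ (1 / (r : ℝ))
  have ha0 : a ≠ 0 := by
    simp [a, rpow_eq_zero_iff, (Metric.measure_closedBall_pos μ (0 : E) one_pos).ne']
  have hb : b ≠ ∞ := rpow_ne_top_of_nonneg hr0 measure_closedBall_lt_top.ne
  refine ⟨(a⁻¹ * (K * b)).toNNReal, fun u hu => ?_⟩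
  rw [coe_toNNReal (mul_ne_top (inv_ne_top.2 ha0) (mul_ne_top coe_ne_top hb)), mul_assoc,
    ← ENNReal.mul_le_iff_le_inv ha0 (rpow_ne_top_of_nonneg hr0 measure_closedBall_lt_top.ne)]
  borelize F
  have hdu : Continuous (fderiv ℝ u) := hu.continuous_fderiv one_ne_zero
  have htranslate (y : E) :
      eLpNorm (fun x => u (x + y)) r (μ.restrict (Metric.closedBall 0 1)) ≤
      K * eLpNorm (fun x => ‖u (x + y)‖ + ‖fderiv ℝ u (x + y)‖) (2 : ℝ≥0)
        (μ.restrict (Metric.closedBall 0 2)) := by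
    have h := hK (fun x => u (x + y)) (hu.comp (contDiff_id.add contDiff_const))
    simp only [fderiv_comp_add_right] at h
    exact h
  calc a * eLpNorm u r μ
      ≤ K * b * eLpNorm (fun x => ‖u x‖ + ‖fderiv ℝ u x‖) 2 μ :=
        measure_rpow_mul_eLpNorm_le_of_forall_translate_le (p := 2) (q := r) (f := u)
          (g := fun x => ‖u x‖ + ‖fderiv ℝ u x‖) hu.continuous.measurable
          (hu.continuous.norm.add hdu.norm).measurable two_pos (mod_cast hr.1) htranslate
    _ ≤ K * b * (eLpNorm u 2 μ + eLpNorm (fderiv ℝ u) 2 μ) := by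
        gcongr
        rw [← eLpNorm_norm u, ← eLpNorm_norm (fderiv ℝ u)]
        exact eLpNorm_add_le hu.continuous.norm.aestronglyMeasurable
          hdu.norm.aestronglyMeasurable one_le_two

end Sobolev

section SobolevNorm

variable {N : ℕ} {G : Type} [NormedAddCommGroup G] [NormedSpace ℝ G]

theorem sobNorm_one (u : Rn N → G) :
    sobNorm 1 u = eLpNorm u 2 volume + eLpNorm (fderiv ℝ u) 2 volume := by
  rw [sobNorm, Finset.sum_range_succ, Finset.sum_range_one]
  exact congrArg₂ _ (eLpNorm_congr_norm_ae (.of_forall fun x => norm_iteratedFDeriv_zero))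
    (eLpNorm_congr_norm_ae (.of_forall fun x => norm_iteratedFDeriv_one u))

theorem sobNorm_mono {k l : ℕ} (hkl : k ≤ l) (u : Rn N → G) : sobNorm k u ≤ sobNorm l u :=
  Finset.sum_le_sum_of_subset (Finset.range_mono (by omega))

theorem MemSobolev.sobNorm_ne_top {k : ℕ} {u : Rn N → G} (hu : MemSobolev k u) :
    sobNorm k u ≠ ∞ :=
  ENNReal.sum_ne_top.2 fun i hi => (hu.2 i (Finset.mem_range_succ_iff.1 hi)).eLpNorm_ne_top

theorem exists_eLpNorm_le_mul_sobNorm_one [FiniteDimensional ℝ G] (hN : 1 ≤ N) {r : ℝ}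
    (hr : IsSobolevExponent N r) :
    ∃ K : ℝ≥0, ∀ u : Rn N → G, ContDiff ℝ 1 u →
      eLpNorm u (ENNReal.ofReal r) volume ≤ K * sobNorm 1 u := by
  have hr' : IsSobolevExponent (Module.finrank ℝ (Rn N)) r.toNNReal := by
    rwa [finrank_euclideanSpace_fin, Real.coe_toNNReal _ (zero_le_two.trans hr.1)]
  obtain ⟨K, hK⟩ := exists_eLpNorm_le_mul_eLpNorm_add_eLpNorm_fderiv (F := G)
    (volume : Measure (Rn N)) (by simpa using hN) hr'
  exact ⟨K, fun u hu => (hK u hu).trans_eq (by rw [sobNorm_one])⟩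

theorem Subcrit.isSobolevExponent {p : ℝ} (hp : Subcrit N p) : IsSobolevExponent N (p + 1) :=
  ⟨by linarith [hp.1], fun hN => by linarith [hp.2 hN]⟩

end SobolevNorm

section Remainder

variable {E F : Type*} [NormedAddCommGroup E] [NormedSpace ℝ E] [NormedAddCommGroup F]
  [NormedSpace ℝ F]

theorem norm_sub_sub_fderiv_le_of_norm_fderiv_sub_le {f : E → F} (hf : Differentiable ℝ f)
    (a b : E) {B : ℝ} (hB : ∀ z, ‖z - a‖ ≤ ‖b‖ → ‖fderiv ℝ f z - fderiv ℝ f a‖ ≤ B) :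
    ‖f (a + b) - f a - fderiv ℝ f a b‖ ≤ B * ‖b‖ := by
  have := (convex_closedBall a ‖b‖).norm_image_sub_le_of_norm_hasFDerivWithin_le'
    (fun z _ => (hf z).hasFDerivAt.hasFDerivWithinAt)
    (fun z hz => hB z (mem_closedBall_iff_norm.1 hz))
    (Metric.mem_closedBall_self (norm_nonneg b)) (y := a + b) (by simp)
  simpa only [add_sub_cancel_left] using this

end Remainder

theorem H1bound.exists_norm_fderiv_sub_le {p : ℝ} {f : ℂ → ℂ} (hf : H1bound p f) :
    ∃ C : ℝ≥0, ∀ a z : ℂ, ‖fderiv ℝ f z - fderiv ℝ f a‖ ≤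
      C * ((‖a‖ + ‖z - a‖) ^ max (p - 2) 0 * ‖z - a‖ ^ (min p 2 - 1)) := by
  obtain ⟨-, -, -, C, hsub, hsuper⟩ := hf
  refine ⟨2 * Real.nnabs C, fun a z => ?_⟩
  rw [NNReal.coe_mul, NNReal.coe_ofNat, Real.coe_nnabs]
  obtain hp | hp := le_or_gt p 2
  · rw [max_eq_right (by linarith), min_eq_left hp, Real.rpow_zero, one_mul]
    refine (hsub hp z a).trans ?_
    gcongr
    linarith [le_abs_self C, abs_nonneg C]
  · rw [max_eq_left (by linarith), min_eq_right hp.le]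
    have hz : ‖z‖ ≤ ‖a‖ + ‖z - a‖ := by simpa using norm_add_le a (z - a)
    calc ‖fderiv ℝ f z - fderiv ℝ f a‖
        ≤ |C| * (‖z‖ ^ (p - 2) + ‖a‖ ^ (p - 2)) * ‖z - a‖ :=
          (hsuper hp z a).trans (by gcongr; exact le_abs_self C)
      _ ≤ |C| * ((‖a‖ + ‖z - a‖) ^ (p - 2) + (‖a‖ + ‖z - a‖) ^ (p - 2)) * ‖z - a‖ := by
          gcongr
          exact le_add_of_nonneg_right (norm_nonneg _)
      _ = 2 * |C| * ((‖a‖ + ‖z - a‖) ^ (p - 2) * ‖z - a‖ ^ (2 - 1 : ℝ)) := by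
          rw [show (2 - 1 : ℝ) = 1 by norm_num, Real.rpow_one]
          ring

theorem H1bound.exists_norm_remainder_le {p : ℝ} {f : ℂ → ℂ} (hf : H1bound p f) (hp : 1 ≤ p) :
    ∃ C : ℝ≥0, ∀ a b : ℂ, ‖f (a + b) - f a - fderiv ℝ f a b‖ ≤
      C * ((‖a‖ + ‖b‖) ^ max (p - 2) 0 * ‖b‖ ^ min p 2) := by
  obtain ⟨C, hC⟩ := hf.exists_norm_fderiv_sub_le
  have hm : 0 ≤ min p 2 - 1 := sub_nonneg.2 (le_min hp one_le_two)
  refine ⟨C, fun a b => ?_⟩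
  calc ‖f (a + b) - f a - fderiv ℝ f a b‖
      ≤ C * ((‖a‖ + ‖b‖) ^ max (p - 2) 0 * ‖b‖ ^ (min p 2 - 1)) * ‖b‖ :=
        norm_sub_sub_fderiv_le_of_norm_fderiv_sub_le (hf.1.differentiable one_ne_zero) a b
          fun z hz => (hC a z).trans (by gcongr)
    _ = C * ((‖a‖ + ‖b‖) ^ max (p - 2) 0 * ‖b‖ ^ min p 2) := by
        rw [mul_assoc, mul_assoc, ← Real.rpow_add_one' (norm_nonneg b) (by linarith),
          sub_add_cancel]

theorem eLpNorm_norm_rpow_mul_norm_rpow_le {α E F : Type*} [MeasurableSpace α]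
    [NormedAddCommGroup E] [NormedAddCommGroup F] {μ : Measure α} {f : α → E} {g : α → F}
    (hf : AEStronglyMeasurable f μ) (hg : AEStronglyMeasurable g μ) {a b r : ℝ} (ha : 0 ≤ a)
    (hb : 0 ≤ b) (hab : 0 < a + b) (hr : 0 < r) :
    eLpNorm (fun x => ‖f x‖ ^ a * ‖g x‖ ^ b) (ENNReal.ofReal (r / (a + b))) μ ≤
      eLpNorm f (ENNReal.ofReal r) μ ^ a * eLpNorm g (ENNReal.ofReal r) μ ^ b := by
  have hrab : 0 < r / (a + b) := div_pos hr hab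
  have hpow (x : α) : ‖‖f x‖ ^ a * ‖g x‖ ^ b‖ₑ ^ (r / (a + b)) =
      (‖f x‖ₑ ^ r) ^ (a / (a + b)) * (‖g x‖ₑ ^ r) ^ (b / (a + b)) := by
    rw [enorm_mul, Real.enorm_rpow_of_nonneg (norm_nonneg _) ha,
      Real.enorm_rpow_of_nonneg (norm_nonneg _) hb, mul_rpow_of_nonneg _ _ hrab.le, enorm_norm,
      enorm_norm, ← rpow_mul, ← rpow_mul, ← rpow_mul, ← rpow_mul]
    congr 2 <;> field_simp
  simp only [eLpNorm_eq_lintegral_rpow_enorm_toReal (ofReal_pos.2 hr).ne' ofReal_ne_top,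
    eLpNorm_eq_lintegral_rpow_enorm_toReal (ofReal_pos.2 hrab).ne' ofReal_ne_top,
    toReal_ofReal hr.le, toReal_ofReal hrab.le, hpow]
  calc (∫⁻ x, (‖f x‖ₑ ^ r) ^ (a / (a + b)) * (‖g x‖ₑ ^ r) ^ (b / (a + b)) ∂μ) ^
        (1 / (r / (a + b)))
      ≤ ((∫⁻ x, ‖f x‖ₑ ^ r ∂μ) ^ (a / (a + b)) * (∫⁻ x, ‖g x‖ₑ ^ r ∂μ) ^ (b / (a + b))) ^
          (1 / (r / (a + b))) := by
        gcongr
        exact lintegral_mul_norm_pow_le (hf.enorm.pow_const _) (hg.enorm.pow_const _)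
          (by positivity) (by positivity) (by field_simp)
    _ = ((∫⁻ x, ‖f x‖ₑ ^ r ∂μ) ^ (1 / r)) ^ a * ((∫⁻ x, ‖g x‖ₑ ^ r ∂μ) ^ (1 / r)) ^ b := by
        rw [mul_rpow_of_nonneg _ _ (by positivity), ← rpow_mul, ← rpow_mul, ← rpow_mul, ← rpow_mul]
        congr 2 <;> field_simp

theorem exists_rpow_add_mul_rpow_le {P : ℝ≥0∞} (hP : P ≠ ∞) {s m : ℝ} (hs : 0 ≤ s) (hm : 0 ≤ m) :
    ∃ C : ℝ≥0, ∀ X : ℝ≥0∞, (P + X) ^ s * X ^ m ≤ C * (X ^ m + X ^ (s + m)) := by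
  have hc : LpAddConst (ENNReal.ofReal s)⁻¹ * (P ^ s + 1) ≠ ∞ :=
    mul_ne_top (LpAddConst_lt_top _).ne (add_ne_top.2 ⟨rpow_ne_top_of_nonneg hs hP, one_ne_top⟩)
  refine ⟨(LpAddConst (ENNReal.ofReal s)⁻¹ * (P ^ s + 1)).toNNReal, fun X => ?_⟩
  rw [coe_toNNReal hc]
  calc (P + X) ^ s * X ^ m
      ≤ LpAddConst (ENNReal.ofReal s)⁻¹ * (P ^ s + X ^ s) * X ^ m := by
        gcongr
        exact rpow_add_le_mul_rpow_add_rpow' _ _ hs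
    _ = LpAddConst (ENNReal.ofReal s)⁻¹ * (P ^ s * X ^ m + 1 * X ^ (s + m)) := by
        rw [rpow_add_of_nonneg _ _ hs hm]
        ring
    _ ≤ LpAddConst (ENNReal.ofReal s)⁻¹ *
          ((P ^ s + 1) * X ^ m + (P ^ s + 1) * X ^ (s + m)) := by
        gcongr
        · exact le_self_add
        · exact le_add_self
    _ = LpAddConst (ENNReal.ofReal s)⁻¹ * (P ^ s + 1) * (X ^ m + X ^ (s + m)) := by ring

theorem rpow_min_le_rpow_add_rpow (X : ℝ≥0∞) (a b : ℝ) : X ^ min a b ≤ X ^ a + X ^ b := by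
  obtain h | h := min_choice a b <;> rw [h]
  · exact le_self_add
  · exact le_add_self

theorem exists_rpow_add_rpow_le_of_le_mul (K : ℝ≥0) {a b : ℝ} (ha : 0 ≤ a) (hb : 0 ≤ b) :
    ∃ C : ℝ≥0, ∀ X Y : ℝ≥0∞, Y ≤ K * X → Y ^ a + Y ^ b ≤ C * (X ^ a + X ^ b) := by
  refine ⟨K ^ a + K ^ b, fun X Y hY => ?_⟩
  calc Y ^ a + Y ^ b ≤ (K * X) ^ a + (K * X) ^ b := by gcongr
    _ = (K : ℝ≥0∞) ^ a * X ^ a + K ^ b * X ^ b := by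
        rw [mul_rpow_of_nonneg _ _ ha, mul_rpow_of_nonneg _ _ hb]
    _ ≤ (K ^ a + K ^ b) * X ^ a + (K ^ a + K ^ b) * X ^ b := by
        gcongr
        · exact le_self_add
        · exact le_add_self
    _ = (K ^ a + K ^ b : ℝ≥0) * (X ^ a + X ^ b) := by
        rw [coe_add, coe_rpow_of_nonneg _ ha, coe_rpow_of_nonneg _ hb, mul_add]

theorem eq_ofReal_of_one_div_add_one_div_eq_one {p q : ℝ} (hpq : p.HolderConjugate q) {r : ℝ≥0∞}
    (hr : 1 / ENNReal.ofReal p + 1 / r = 1) : r = ENNReal.ofReal q := by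
  have hp : ENNReal.ofReal p ≠ 0 := (ofReal_pos.2 hpq.pos).ne'
  rw [one_div, one_div, ← holderConjugate_iff.1 hpq.ennrealOfReal] at hr
  exact inv_injective ((ENNReal.add_right_inj (inv_ne_top.2 hp)).1 hr)

section SpatialEstimate

variable {N : ℕ} {f : ℂ → ℂ} {φ : Rn N → ℂ} {p r : ℝ}

theorem H1bound.exists_eLpNorm_hfun_le (hf : H1bound p f) (hp : 1 ≤ p) (hr : 1 ≤ r)
    (hφ : MemLp φ (ENNReal.ofReal r) volume) :
    ∃ C : ℝ≥0, ∀ u : Rn N → ℂ, AEStronglyMeasurable u volume →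
      eLpNorm (hfun f φ u) (ENNReal.ofReal (r / p)) volume ≤
        C * (eLpNorm u (ENNReal.ofReal r) volume ^ (2 : ℝ) +
          eLpNorm u (ENNReal.ofReal r) volume ^ p) := by
  have hs : 0 ≤ max (p - 2) 0 := le_max_right _ _
  have hm : 0 ≤ min p 2 := le_min (by linarith) zero_le_two
  have hsm : max (p - 2) 0 + min p 2 = p := by
    obtain h | h := le_total p 2 <;> simp [h]
  obtain ⟨C₁, hC₁⟩ := hf.exists_norm_remainder_le hp
  obtain ⟨C₂, hC₂⟩ := exists_rpow_add_mul_rpow_le hφ.eLpNorm_ne_top hs hm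
  refine ⟨C₁ * C₂ * 2, fun u hu => ?_⟩
  set X := eLpNorm u (ENNReal.ofReal r) volume
  have hbound (x : Rn N) :
      ‖hfun f φ u x‖ ≤ C₁ * ‖‖‖φ x‖ + ‖u x‖‖ ^ max (p - 2) 0 * ‖u x‖ ^ min p 2‖ := by
    have hadd : 0 ≤ ‖φ x‖ + ‖u x‖ := by positivity
    rw [hfun, neg_mul, norm_neg, norm_mul, Complex.norm_I, one_mul, Real.norm_of_nonneg hadd,
      Real.norm_of_nonneg (by positivity)]
    exact hC₁ (φ x) (u x)
  have hadd : eLpNorm (fun x => ‖φ x‖ + ‖u x‖) (ENNReal.ofReal r) volume ≤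
      eLpNorm φ (ENNReal.ofReal r) volume + X := by
    simpa only [eLpNorm_norm] using! eLpNorm_add_le hφ.1.norm hu.norm (one_le_ofReal.2 hr)
  calc eLpNorm (hfun f φ u) (ENNReal.ofReal (r / p)) volume
      ≤ C₁ * eLpNorm (fun x => ‖‖φ x‖ + ‖u x‖‖ ^ max (p - 2) 0 * ‖u x‖ ^ min p 2)
          (ENNReal.ofReal (r / p)) volume := by
        simpa using eLpNorm_le_mul_eLpNorm_of_ae_le_mul (.of_forall hbound) _
    _ ≤ C₁ * ((eLpNorm φ (ENNReal.ofReal r) volume + X) ^ max (p - 2) 0 * X ^ min p 2) := by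
        have := eLpNorm_norm_rpow_mul_norm_rpow_le (hφ.1.norm.add hu.norm) hu hs hm
          (hsm.symm ▸ by linarith) (by linarith : 0 < r)
        rw [hsm] at this
        grw [← hadd]
        gcongr
        exact this
    _ ≤ C₁ * (C₂ * (X ^ min p 2 + X ^ p)) := by
        grw [hC₂, hsm]
    _ ≤ C₁ * (C₂ * ((X ^ p + X ^ (2 : ℝ)) + (X ^ (2 : ℝ) + X ^ p))) := by
        gcongr
        · exact rpow_min_le_rpow_add_rpow X p 2
        · exact le_add_self
    _ = (C₁ * C₂ * 2 : ℝ≥0) * (X ^ (2 : ℝ) + X ^ p) := by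
        push_cast
        ring

theorem H1bound.exists_eLpNorm_hfun_le_sobNorm (hN : 1 ≤ N) (hf : H1bound p f)
    (hpN : IsSobolevExponent N (p + 1)) (hφ : MemSobolev 1 φ) {r' : ℝ≥0∞}
    (hr' : 1 / ENNReal.ofReal (p + 1) + 1 / r' = 1) :
    ∃ C : ℝ≥0, ∀ u : Rn N → ℂ, ContDiff ℝ 1 u →
      eLpNorm (hfun f φ u) r' volume ≤ C * (sobNorm 1 u ^ (2 : ℝ) + sobNorm 1 u ^ p) := by
  have hp : 1 ≤ p := by linarith [hpN.1]
  obtain ⟨K, hK⟩ := exists_eLpNorm_le_mul_sobNorm_one (G := ℂ) hN hpN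
  have hφp : MemLp φ (ENNReal.ofReal (p + 1)) volume :=
    ⟨hφ.1.continuous.aestronglyMeasurable,
      (hK φ hφ.1).trans_lt (mul_ne_top coe_ne_top hφ.sobNorm_ne_top).lt_top⟩
  obtain ⟨C₁, hC₁⟩ := hf.exists_eLpNorm_hfun_le hp (by linarith) hφp
  obtain ⟨C₂, hC₂⟩ := exists_rpow_add_rpow_le_of_le_mul K zero_le_two (by linarith : 0 ≤ p)
  have hconj : (p + 1).HolderConjugate ((p + 1) / p) := by
    rw [Real.holderConjugate_iff]
    exact ⟨by linarith, by field_simp; ring⟩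
  obtain rfl := eq_ofReal_of_one_div_add_one_div_eq_one hconj hr'
  refine ⟨C₁ * C₂, fun u hu => ?_⟩
  grw [hC₁ u hu.continuous.aestronglyMeasurable, hC₂ _ _ (hK u hu), coe_mul, mul_assoc]

end SpatialEstimate

/-- The weighted norm `e^{λT} ‖t ↦ e^{-λt} Φ t‖_{L^q(0,T)}` of a function of time alone: `wNorm` and
`wNormH2` are this norm applied to a norm in the space variable. -/
def weightedTimeNorm (q : ℝ≥0∞) (lam T : ℝ) (Φ : ℝ → ℝ≥0∞) : ℝ≥0∞ :=
  ENNReal.ofReal (Real.exp (lam * T)) *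
    timeLp q T fun t => ENNReal.ofReal (Real.exp (-(lam * t))) * Φ t

section TimeEstimate

variable {q : ℝ≥0∞}

theorem wNormH2_eq_weightedTimeNorm {N : ℕ} {G : Type} [NormedAddCommGroup G] [NormedSpace ℝ G]
    (lam T : ℝ) (v : ℝ → Rn N → G) :
    wNormH2 lam T v = weightedTimeNorm ∞ lam T fun t => sobNorm 2 (v t) := by
  rw [weightedTimeNorm, timeLp, if_pos rfl, wNormH2]

theorem lintegral_Ioo_exp_mul_sub_le {a : ℝ} (ha : 0 < a) (T : ℝ) :
    ∫⁻ t in Set.Ioo 0 T, ENNReal.ofReal (Real.exp (a * (t - T))) ≤ ENNReal.ofReal a⁻¹ := by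
  have hint : IntegrableOn (fun t => Real.exp (a * (t - T))) (Set.Iic T) := by
    simp only [mul_sub, Real.exp_sub]
    exact (integrableOn_exp_mul_Iic ha T).div_const _
  calc ∫⁻ t in Set.Ioo 0 T, ENNReal.ofReal (Real.exp (a * (t - T)))
      ≤ ∫⁻ t in Set.Iic T, ENNReal.ofReal (Real.exp (a * (t - T))) :=
        lintegral_mono_set fun t ht => ht.2.le
    _ = ENNReal.ofReal (∫ t in Set.Iic T, Real.exp (a * (t - T))) :=
        (ofReal_integral_eq_lintegral_ofReal hint
          (.of_forall fun t => (Real.exp_pos _).le)).symm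
    _ = ENNReal.ofReal a⁻¹ := by
        simp only [mul_sub, Real.exp_sub, integral_div, integral_exp_mul_Iic ha]
        field_simp

theorem exists_timeLp_le_of_ae_le_exp (hq : q ≠ 0) {κ : ℝ} (hκ : 0 < κ) :
    ∃ C : ℝ≥0, ∀ (T : ℝ) (Φ : ℝ → ℝ≥0∞) (A : ℝ≥0∞),
      (∀ᵐ t ∂volume.restrict (Set.Ioo 0 T), Φ t ≤ A * ENNReal.ofReal (Real.exp (κ * (t - T)))) →
      timeLp q T Φ ≤ C * A := by
  obtain rfl | hq' := eq_or_ne q ∞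
  · refine ⟨1, fun T Φ A hΦ => ?_⟩
    rw [timeLp, if_pos rfl, coe_one, one_mul]
    refine essSup_le_of_ae_le A ?_
    filter_upwards [hΦ, ae_restrict_mem measurableSet_Ioo] with t ht htT
    refine ht.trans (mul_le_of_le_one_right' (ofReal_le_one.2 (Real.exp_le_one_iff.2 ?_)))
    nlinarith [htT.2]
  have hq0 : 0 < q.toReal := toReal_pos hq hq'
  refine ⟨(κ * q.toReal)⁻¹.toNNReal ^ (1 / q.toReal), fun T Φ A hΦ => ?_⟩
  rw [timeLp, if_neg hq', coe_rpow_of_nonneg _ (by positivity)]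
  calc (∫⁻ t in Set.Ioo 0 T, Φ t ^ q.toReal) ^ (1 / q.toReal)
      ≤ (∫⁻ t in Set.Ioo 0 T, A ^ q.toReal *
          ENNReal.ofReal (Real.exp (κ * q.toReal * (t - T)))) ^ (1 / q.toReal) := by
        refine rpow_le_rpow (lintegral_mono_ae ?_) (by positivity)
        filter_upwards [hΦ] with t ht
        grw [ht, mul_rpow_of_nonneg _ _ hq0.le, ofReal_rpow_of_pos (Real.exp_pos _), ← Real.exp_mul,
          mul_right_comm]
    _ ≤ (A ^ q.toReal * ENNReal.ofReal (κ * q.toReal)⁻¹) ^ (1 / q.toReal) := by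
        rw [lintegral_const_mul _ (by fun_prop)]
        grw [lintegral_Ioo_exp_mul_sub_le (by positivity)]
    _ = ENNReal.ofReal (κ * q.toReal)⁻¹ ^ (1 / q.toReal) * A := by
        rw [mul_rpow_of_nonneg _ _ (by positivity), ← rpow_mul, mul_one_div_cancel hq0.ne',
          rpow_one, mul_comm]

theorem exists_weightedTimeNorm_le_of_ae_le_exp (hq : q ≠ 0) {μ κ : ℝ} (hμκ : μ < κ) :
    ∃ C : ℝ≥0, ∀ (T : ℝ) (Φ : ℝ → ℝ≥0∞) (A : ℝ≥0∞),
      (∀ᵐ t ∂volume.restrict (Set.Ioo 0 T), Φ t ≤ A * ENNReal.ofReal (Real.exp (κ * (t - T)))) →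
      weightedTimeNorm q μ T Φ ≤ C * A := by
  obtain ⟨C, hC⟩ := exists_timeLp_le_of_ae_le_exp hq (sub_pos.2 hμκ)
  refine ⟨C, fun T Φ A hΦ => ?_⟩
  have hexp (t : ℝ) : ENNReal.ofReal (Real.exp (-(μ * t))) *
      ENNReal.ofReal (Real.exp (κ * (t - T))) =
      ENNReal.ofReal (Real.exp (-(μ * T))) * ENNReal.ofReal (Real.exp ((κ - μ) * (t - T))) := by
    rw [← ofReal_mul (Real.exp_pos _).le, ← ofReal_mul (Real.exp_pos _).le, ← Real.exp_add,
      ← Real.exp_add]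
    ring_nf
  have hbound : ∀ᵐ t ∂volume.restrict (Set.Ioo 0 T), ENNReal.ofReal (Real.exp (-(μ * t))) * Φ t ≤
      A * ENNReal.ofReal (Real.exp (-(μ * T))) * ENNReal.ofReal (Real.exp ((κ - μ) * (t - T))) := by
    filter_upwards [hΦ] with t ht
    grw [ht, mul_left_comm, hexp, mul_assoc]
  calc weightedTimeNorm q μ T Φ
      ≤ ENNReal.ofReal (Real.exp (μ * T)) * (C * (A * ENNReal.ofReal (Real.exp (-(μ * T))))) := by
        grw [weightedTimeNorm, hC T _ _ hbound]
    _ = ENNReal.ofReal (Real.exp (μ * T) * Real.exp (-(μ * T))) * (C * A) := by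
        rw [ofReal_mul (Real.exp_pos _).le]
        ring
    _ = C * A := by rw [← Real.exp_add, add_neg_cancel, Real.exp_zero, ofReal_one, one_mul]

theorem ae_le_weightedTimeNorm_top_mul_exp (lam T : ℝ) (Φ : ℝ → ℝ≥0∞) :
    ∀ᵐ t ∂volume.restrict (Set.Ioo 0 T),
      Φ t ≤ weightedTimeNorm ∞ lam T Φ * ENNReal.ofReal (Real.exp (lam * (t - T))) := by
  rw [weightedTimeNorm, timeLp, if_pos rfl]
  filter_upwards [ae_le_essSup fun t => ENNReal.ofReal (Real.exp (-(lam * t))) * Φ t] with t ht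
  calc Φ t = ENNReal.ofReal (Real.exp (lam * T)) * (ENNReal.ofReal (Real.exp (-(lam * t))) * Φ t) *
        ENNReal.ofReal (Real.exp (lam * (t - T))) := by
        rw [← mul_assoc, mul_right_comm, ← ofReal_mul (Real.exp_pos _).le,
          ← ofReal_mul (by positivity), ← Real.exp_add, ← Real.exp_add]
        ring_nf
        simp
    _ ≤ _ := by grw [ht]

end TimeEstimate

theorem rpow_mul_ofReal_exp_le (M : ℝ≥0∞) {lam κ a t : ℝ} (ha : 0 ≤ a) (hκ : κ ≤ a * lam)
    (ht : t ≤ 0) :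
    (M * ENNReal.ofReal (Real.exp (lam * t))) ^ a ≤ M ^ a * ENNReal.ofReal (Real.exp (κ * t)) := by
  rw [mul_rpow_of_nonneg _ _ ha, ofReal_rpow_of_pos (Real.exp_pos _), ← Real.exp_mul]
  have hexp : lam * t * a ≤ κ * t := by
    rw [mul_right_comm, mul_comm lam]
    exact mul_le_mul_of_nonpos_right hκ ht
  gcongr

theorem H1bound.exists_wNorm_hfun_le {N : ℕ} (hN : 1 ≤ N) {f : ℂ → ℂ} {p : ℝ}
    (hf : H1bound p f) (hpN : IsSobolevExponent N (p + 1)) {φ : Rn N → ℂ} (hφ : MemSobolev 1 φ)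
    {q' r' : ℝ≥0∞} (hq' : q' ≠ 0)
    (hr' : 1 / ENNReal.ofReal (p + 1) + 1 / r' = 1) {lam μ : ℝ} (hμ₂ : μ < 2 * lam)
    (hμp : μ < p * lam) :
    ∃ C : ℝ≥0, ∀ (v : ℝ → Rn N → ℂ) (T : ℝ), (∀ t, ContDiff ℝ 1 (v t)) →
      wNorm q' r' μ T (fun t => hfun f φ (v t)) ≤
        C * (wNormH2 lam T v ^ (2 : ℝ) + wNormH2 lam T v ^ p) := by
  have hp : 0 ≤ p := by linarith [hpN.1]
  obtain ⟨C₁, hC₁⟩ := hf.exists_eLpNorm_hfun_le_sobNorm hN hpN hφ hr'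
  obtain ⟨C₂, hC₂⟩ := exists_weightedTimeNorm_le_of_ae_le_exp hq' (lt_min hμ₂ hμp)
  refine ⟨C₂ * C₁, fun v T hv => ?_⟩
  rw [coe_mul, mul_assoc]
  refine hC₂ T _ _ ?_
  rw [wNormH2_eq_weightedTimeNorm]
  set M := weightedTimeNorm ∞ lam T fun t => sobNorm 2 (v t)
  filter_upwards [ae_le_weightedTimeNorm_top_mul_exp lam T fun t => sobNorm 2 (v t),
    ae_restrict_mem measurableSet_Ioo] with t ht htT
  have htT' : t - T ≤ 0 := by linarith [htT.2]
  grw [hC₁ (v t) (hv t), sobNorm_mono one_le_two, ht,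
    rpow_mul_ofReal_exp_le M zero_le_two (min_le_left _ _) htT',
    rpow_mul_ofReal_exp_le M hp (min_le_right _ _) htT', mul_assoc, add_mul]

theorem wNormH2_le_XNorm {N : ℕ} {G : Type} [NormedAddCommGroup G] [NormedSpace ℝ G]
    (q₁ r₁ q₂ r₂ : ℝ≥0∞) (lam T : ℝ) (v : ℝ → Rn N → G) :
    wNormH2 lam T v ≤ XNorm q₁ r₁ q₂ r₂ lam T v :=
  le_self_add.trans le_self_add

theorem weighted_nonlinear_estimate_general {N : ℕ} (hN : 1 ≤ N) {f₁ f₂ : ℂ → ℂ} {p₁ p₂ : ℝ}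
    {φ : Rn N → ℂ} (hp₁ : IsSobolevExponent N (p₁ + 1)) (hp₂ : IsSobolevExponent N (p₂ + 1))
    (hf₁ : H1bound p₁ f₁) (hf₂ : H1bound p₂ f₂) (hφ : MemSobolev 1 φ) {lam μ : ℝ} (hlam : 0 ≤ lam)
    (hμ : μ < (1 + alphaConst (p₁ + 1) (p₂ + 1)) * lam) {q₁ r₁ q₂ r₂ q₁' r₁' q₂' r₂' : ℝ≥0∞}
    (hq₁' : q₁' ≠ 0) (hr₁' : 1 / ENNReal.ofReal (p₁ + 1) + 1 / r₁' = 1)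
    (hq₂' : q₂' ≠ 0) (hr₂' : 1 / ENNReal.ofReal (p₂ + 1) + 1 / r₂' = 1) :
    ∃ C : ℝ, 0 < C ∧ ∀ (v : ℝ → Rn N → ℂ) (T : ℝ), (∀ t, ContDiff ℝ 1 (v t)) →
      wNorm q₁' r₁' μ T (fun t => hfun f₁ φ (v t)) ≤ ENNReal.ofReal C *
        (XNorm q₁ r₁ q₂ r₂ lam T v ^ (2 : ℝ) + XNorm q₁ r₁ q₂ r₂ lam T v ^ p₁) ∧
      wNorm q₂' r₂' μ T (fun t => hfun f₂ φ (v t)) ≤ ENNReal.ofReal C *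
        (XNorm q₁ r₁ q₂ r₂ lam T v ^ (2 : ℝ) + XNorm q₁ r₁ q₂ r₂ lam T v ^ p₂) := by
  have hα : alphaConst (p₁ + 1) (p₂ + 1) ≤ 1 := min_le_left _ _
  have hα₁ : alphaConst (p₁ + 1) (p₂ + 1) ≤ p₁ + 1 - 2 :=
    (min_le_right _ _).trans (min_le_left _ _)
  have hα₂ : alphaConst (p₁ + 1) (p₂ + 1) ≤ p₂ + 1 - 2 :=
    (min_le_right _ _).trans (min_le_right _ _)
  have hμ₂ : μ < 2 * lam := by nlinarith
  obtain ⟨C₁, hC₁⟩ := hf₁.exists_wNorm_hfun_le hN hp₁ hφ hq₁' hr₁' hμ₂ (by nlinarith)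
  obtain ⟨C₂, hC₂⟩ := hf₂.exists_wNorm_hfun_le hN hp₂ hφ hq₂' hr₂' hμ₂ (by nlinarith)
  refine ⟨(C₁ + C₂ + 1 : ℝ≥0), by positivity, fun v T hv => ?_⟩
  have hX := wNormH2_le_XNorm q₁ r₁ q₂ r₂ lam T v
  rw [ofReal_coe_nnreal]
  have hp₁0 : 0 ≤ p₁ := by linarith [hp₁.1]
  have hp₂0 : 0 ≤ p₂ := by linarith [hp₂.1]
  constructor
  · refine (hC₁ v T hv).trans ?_
    gcongr
    exact le_add_right le_self_add
  · refine (hC₂ v T hv).trans ?_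
    gcongr
    exact le_add_right le_add_self

/-- Lemma 3.4: ‖h_j(v)‖_{L^{q_j',μ}_T L^{r_j'}} ≤ C(‖v‖_{X_T}² + ‖v‖_{X_T}^{r_j-1}). -/
theorem weighted_nonlinear_estimate
    {N : ℕ} (hN : 1 ≤ N) (g : ℝ → ℝ) (f₁ f₂ : ℂ → ℂ) (p₁ p₂ ω : ℝ)
    (φ : Rn N → ℂ)
    (h1 : H1full N g f₁ f₂ p₁ p₂) (h2 : H2hyp ω g φ) (h3 : H3hyp g ω φ)
    (lamstar : ℂ) (hstar : 0 < lamstar.re ∧ IsEigen g ω φ lamstar)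
    (hmax : ∀ z : ℂ, IsEigen g ω φ z → z.re ≤ lamstar.re)
    (ν lam μ : ℝ)
    (hchain : 0 < lam ∧ lam < lamstar.re ∧ lamstar.re < ν ∧ ν < μ ∧
      μ < (1 + alphaConst (p₁ + 1) (p₂ + 1)) * lam)
    (q₁ q₂ q₁' r₁' q₂' r₂' : ℝ≥0∞)
    (hadm1 : Admissible N q₁ (ENNReal.ofReal (p₁ + 1)))
    (hadm2 : Admissible N q₂ (ENNReal.ofReal (p₂ + 1)))
    (hq₁' : 1 / q₁ + 1 / q₁' = 1) (hr₁' : 1 / ENNReal.ofReal (p₁ + 1) + 1 / r₁' = 1)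
    (hq₂' : 1 / q₂ + 1 / q₂' = 1) (hr₂' : 1 / ENNReal.ofReal (p₂ + 1) + 1 / r₂' = 1) :
    ∃ C : ℝ, 0 < C ∧
      ∀ (v : ℝ → Rn N → ℂ) (T : ℝ), 0 < T → (∀ t, MemSobolev 2 (v t)) →
        (wNorm q₁' r₁' μ T (fun t => hfun f₁ φ (v t)) ≤
          ENNReal.ofReal C *
            (XNorm q₁ (ENNReal.ofReal (p₁ + 1)) q₂ (ENNReal.ofReal (p₂ + 1)) lam T v
                ^ (2 : ℝ) +
              XNorm q₁ (ENNReal.ofReal (p₁ + 1)) q₂ (ENNReal.ofReal (p₂ + 1)) lam T v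
                ^ (p₁ + 1 - 1))) ∧
        (wNorm q₂' r₂' μ T (fun t => hfun f₂ φ (v t)) ≤
          ENNReal.ofReal C *
            (XNorm q₁ (ENNReal.ofReal (p₁ + 1)) q₂ (ENNReal.ofReal (p₂ + 1)) lam T v
                ^ (2 : ℝ) +
              XNorm q₁ (ENNReal.ofReal (p₁ + 1)) q₂ (ENNReal.ofReal (p₂ + 1)) lam T v
                ^ (p₂ + 1 - 1))) := by
  have hq₁0 : q₁' ≠ 0 := by rintro rfl; simp at hq₁'
  have hq₂0 : q₂' ≠ 0 := by rintro rfl; simp at hq₂'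
  obtain ⟨C, hC, hbound⟩ := weighted_nonlinear_estimate_general hN
    h1.sub1.isSobolevExponent h1.sub2.isSobolevExponent h1.bd1 h1.bd2 h2.2.2.1 hchain.1.le
    hchain.2.2.2.2 hq₁0 hr₁' hq₂0 hr₂'
  simp only [add_sub_cancel_right]
  exact ⟨C, hC, fun v T _ hv => hbound v T fun t => (hv t).1.of_le one_le_two⟩

end
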